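/- arXiv:1906.00154 — 2 statements merged into one kernel-verified Lean document; each statement's English description precedes it below -/
import Mathlib

section
/- Let k be a field of characteristic zero and A = ⊕_{i=0}^n A^i a finite-dimensional graded commutative k-algebra that is generated as a k-algebra by A^1, satisfies A^0 ≅ k ≅ A^n, and has Poincaré duality. Fix a k-basis a_1, ..., a_r of A^1 and a k-linear isomorphism ι: A^n → k, and let P ∈ k[x_1, ..., x_r] be the homogeneous polynomial of degree n defined by P(x_1, ..., x_r) = ι((x_1 a_1 + ... + x_r a_r)^n), i.e., P = Σ_{|α| = n} (n!/(α_1!⋯α_r!)) ι(a_1^{α_1}⋯a_r^{α_r}) x^α. Let Φ: k[t_1, ..., t_r] → A be the k-algebra homomorphism sending t_i to a_i, and let I = {f ∈ k[t_1, ..., t_r] : f(∂_1, ..., ∂_r) · P = 0}, the ideal of polynomials that annihilate P when the variables are replaced by the corresponding partial derivative operators ∂_i = ∂/∂x_i. Then ker Φ = I, and consequently Φ induces an isomorphism of graded k-algebras A ≅ k[t_1, ..., t_r]/I. -/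
open MvPolynomial

/-- A graded algebra `A = ⊕_{i=0}^n A^i` with `A^0 ≅ A^n ≅ k` has Poincaré duality
if for every `0 ≤ i ≤ n` the pairing `A^i × A^{n-i} → A^n ≅ k` is non-degenerate. -/
def PoincareDuality {k A : Type*} [Field k] [CommRing A] [Algebra k A]
    (𝒜 : ℕ → Submodule k A) (n : ℕ) : Prop :=
  ∀ i ≤ n,
    (∀ x ∈ 𝒜 i, x ≠ 0 → ∃ y ∈ 𝒜 (n - i), x * y ≠ 0) ∧
    (∀ y ∈ 𝒜 (n - i), y ≠ 0 → ∃ x ∈ 𝒜 i, x * y ≠ 0)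

/-- For `f = Σ_β c_β t^β`, the differential operator `f(∂_1, …, ∂_r)` applied to `g`:
`Σ_β c_β ∂_1^{β_1} ⋯ ∂_r^{β_r} g`. -/
noncomputable def diffOp {k : Type*} [CommRing k] {r : ℕ}
    (f g : MvPolynomial (Fin r) k) : MvPolynomial (Fin r) k :=
  ∑ β ∈ f.support,
    MvPolynomial.coeff β f •
      (List.finRange r).foldr (fun i p => (fun q => MvPolynomial.pderiv i q)^[β i] p) g

/-- The top power polynomial `P(x_1, …, x_r) = ι((x_1 a_1 + ⋯ + x_r a_r)^n)`:
expand `(x_1 a_1 + ⋯ + x_r a_r)^n` formally in `MvPolynomial (Fin r) A` and apply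
`ι : A^n ≃ k` to each coefficient (each of which lies in `A^n`, extracted via the
degree-`n` component of the decomposition). -/
noncomputable def topPowerPoly {k A : Type*} [Field k] [CommRing A] [Algebra k A]
    (𝒜 : ℕ → Submodule k A) [GradedAlgebra 𝒜] (n : ℕ) {r : ℕ}
    (a : Fin r → A) (ι : (𝒜 n) ≃ₗ[k] k) : MvPolynomial (Fin r) k :=
  ∑ α ∈ ((∑ i, MvPolynomial.X i * MvPolynomial.C (a i)) ^ n).support,
    ι (DirectSum.decompose 𝒜
        (MvPolynomial.coeff α ((∑ i, MvPolynomial.X i * MvPolynomial.C (a i)) ^ n)) n) •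
      MvPolynomial.monomial α (1 : k)

theorem aeval_eq_sum_mine {k A : Type*} [Field k] [CommRing A] [Algebra k A] {r : ℕ}
    (a : Fin r → A) (f : MvPolynomial (Fin r) k) :
    aeval a f = ∑ β ∈ f.support, coeff β f • ∏ j, a j ^ β j := by
  rw [aeval_def, eval₂_eq']
  simp only [Algebra.smul_def]

theorem hw_pderiv {k : Type*} [Field k] {r : ℕ} (i : Fin r) (γ : Fin r →₀ ℕ)
    (p : MvPolynomial (Fin r) k) :
    ((∏ j, (γ j).factorial : ℕ) : k) * coeff γ (pderiv i p) =
      ((∏ j, ((γ + Finsupp.single i 1 : Fin r →₀ ℕ) j).factorial : ℕ) : k) *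
        coeff (γ + Finsupp.single i 1) p := by
  have h : (∏ j, ((γ + Finsupp.single i 1 : Fin r →₀ ℕ) j).factorial) =
      (γ i + 1) * ∏ j, (γ j).factorial := by
    rw [← Finset.mul_prod_erase _ _ (Finset.mem_univ i),
      ← Finset.mul_prod_erase Finset.univ (fun j => (γ j).factorial) (Finset.mem_univ i),
      ← mul_assoc]
    congr 1
    · simp [Nat.factorial_succ]
    · refine Finset.prod_congr rfl fun j hj => ?_
      have : i ≠ j := fun h => Finset.ne_of_mem_erase hj h.symm
      simp [Finsupp.single_apply, this]
  rw [h, coeff_pderiv]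
  push_cast
  ring

theorem hw_iter {k : Type*} [Field k] {r : ℕ} (i : Fin r) (m : ℕ) :
    ∀ (γ : Fin r →₀ ℕ) (p : MvPolynomial (Fin r) k),
    ((∏ j, (γ j).factorial : ℕ) : k) * coeff γ ((fun q => pderiv i q)^[m] p) =
      ((∏ j, ((γ + Finsupp.single i m : Fin r →₀ ℕ) j).factorial : ℕ) : k) *
        coeff (γ + Finsupp.single i m) p := by
  induction m with
  | zero => intro γ p; simp
  | succ m ih =>
    intro γ p
    rw [Function.iterate_succ_apply', hw_pderiv, ih, add_assoc, ← Finsupp.single_add,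
      add_comm 1 m]

theorem hw_fold {k : Type*} [Field k] {r : ℕ} (β : Fin r →₀ ℕ) (p : MvPolynomial (Fin r) k)
    (l : List (Fin r)) : ∀ (γ : Fin r →₀ ℕ),
    ((∏ j, (γ j).factorial : ℕ) : k) *
        coeff γ (l.foldr (fun i p => (fun q => pderiv i q)^[β i] p) p) =
      ((∏ j, ((γ + (l.map fun i => Finsupp.single i (β i)).sum : Fin r →₀ ℕ) j).factorial : ℕ) : k)
        * coeff (γ + (l.map fun i => Finsupp.single i (β i)).sum) p := by
  induction l with
  | nil => intro γ; simp
  | cons i l ih =>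
    intro γ
    rw [List.foldr_cons, hw_iter, ih, List.map_cons, List.sum_cons, add_assoc]

theorem hw_diffOp {k : Type*} [Field k] {r : ℕ} (f p : MvPolynomial (Fin r) k)
    (γ : Fin r →₀ ℕ) :
    ((∏ j, (γ j).factorial : ℕ) : k) * coeff γ (diffOp f p) =
      ∑ β ∈ f.support, coeff β f *
        (((∏ j, ((γ + β : Fin r →₀ ℕ) j).factorial : ℕ) : k) * coeff (γ + β) p) := by
  have hβ : ∀ β : Fin r →₀ ℕ,
      ((List.finRange r).map fun i => Finsupp.single i (β i)).sum = β := by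
    intro β
    rw [← Fin.sum_univ_def, Finsupp.univ_sum_single]
  rw [diffOp, coeff_sum, Finset.mul_sum]
  refine Finset.sum_congr rfl fun β _ => ?_
  have := hw_fold β p (List.finRange r) γ
  rw [hβ] at this
  rw [coeff_smul, smul_eq_mul, ← this]
  ring

theorem coeff_linear_pow {A : Type*} [CommRing A] {r : ℕ} (a : Fin r → A) (n : ℕ)
    (α : Fin r →₀ ℕ) :
    ((∏ j, (α j).factorial : ℕ) : A) * coeff α ((∑ i, X i * C (a i)) ^ n) =
      if ∑ j, α j = n then (n.factorial : A) * ∏ j, a j ^ α j else 0 := by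
  classical
  have hm : ∀ g : Fin r → ℕ, (∏ i, ((X i : MvPolynomial (Fin r) A) * C (a i)) ^ g i) =
      monomial (Finsupp.equivFunOnFinite.symm g) (∏ i, a i ^ g i) := by
    intro g
    rw [monomial_eq, Finsupp.prod_fintype _ _ (by simp)]
    simp only [mul_pow, Finset.prod_mul_distrib, map_prod, map_pow]
    rw [mul_comm]
    rfl
  rw [Finset.sum_pow_eq_sum_piAntidiag, coeff_sum]
  have h2 : ∀ g : Fin r → ℕ, coeff α ((Nat.multinomial Finset.univ g : MvPolynomial (Fin r) A) *
      ∏ i, ((X i : MvPolynomial (Fin r) A) * C (a i)) ^ g i) =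
      if g = α then (Nat.multinomial Finset.univ g : A) * ∏ i, a i ^ g i else 0 := by
    intro g
    rw [hm, ← map_natCast (C : A →+* MvPolynomial (Fin r) A), coeff_C_mul, coeff_monomial]
    have : Finsupp.equivFunOnFinite.symm g = α ↔ g = α := by
      rw [Equiv.symm_apply_eq]; rfl
    simp only [this]
    split_ifs <;> simp
  simp only [h2]
  rw [Finset.sum_ite_eq']
  by_cases h : ∑ j, α j = n
  · have hmem : (α : Fin r → ℕ) ∈ Finset.piAntidiag Finset.univ n := by simp [h]
    rw [if_pos hmem, if_pos h, ← mul_assoc, ← Nat.cast_mul, Nat.multinomial_spec, h]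
  · have hmem : (α : Fin r → ℕ) ∉ Finset.piAntidiag Finset.univ n := by simp [h]
    rw [if_neg hmem, if_neg h, mul_zero]

/-- projection to top degree followed by `ι` -/
noncomputable def topL {k A : Type*} [Field k] [CommRing A] [Algebra k A]
    (𝒜 : ℕ → Submodule k A) [GradedAlgebra 𝒜] (n : ℕ) (ι : (𝒜 n) ≃ₗ[k] k) : A →ₗ[k] k :=
  ι.toLinearMap ∘ₗ (DirectSum.component k ℕ (fun i => 𝒜 i) n) ∘ₗ
    (DirectSum.decomposeLinearEquiv 𝒜).toLinearMap

theorem topL_apply {k A : Type*} [Field k] [CommRing A] [Algebra k A]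
    (𝒜 : ℕ → Submodule k A) [GradedAlgebra 𝒜] (n : ℕ) (ι : (𝒜 n) ≃ₗ[k] k) (x : A) :
    topL 𝒜 n ι x = ι (DirectSum.decompose 𝒜 x n) := rfl

theorem monomial_mem_graded {k A : Type*} [Field k] [CommRing A] [Algebra k A]
    (𝒜 : ℕ → Submodule k A) [GradedAlgebra 𝒜] {r : ℕ} (a : Fin r → A) (ha : ∀ i, a i ∈ 𝒜 1)
    (α : Fin r →₀ ℕ) : ∏ j, a j ^ α j ∈ 𝒜 (∑ j, α j) := by
  have := SetLike.prod_pow_mem_graded 𝒜 (F := Finset.univ) (fun _ : Fin r => 1) a α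
    (fun i _ => ha i)
  simpa using this

theorem hw_topPower {k A : Type*} [Field k] [CommRing A] [Algebra k A]
    (𝒜 : ℕ → Submodule k A) [GradedAlgebra 𝒜] (n : ℕ) {r : ℕ}
    (a : Fin r → A) (ha : ∀ i, a i ∈ 𝒜 1) (ι : (𝒜 n) ≃ₗ[k] k) (α : Fin r →₀ ℕ) :
    ((∏ j, (α j).factorial : ℕ) : k) * coeff α (topPowerPoly 𝒜 n a ι) =
      (n.factorial : k) * topL 𝒜 n ι (∏ j, a j ^ α j) := by
  classical
  have h1 : coeff α (topPowerPoly 𝒜 n a ι) =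
      topL 𝒜 n ι (coeff α ((∑ i, X i * C (a i)) ^ n)) := by
    rw [topPowerPoly, coeff_sum]
    simp only [coeff_smul, coeff_monomial, smul_eq_mul, mul_ite, mul_one, mul_zero,
      ← topL_apply]
    rw [Finset.sum_ite_eq']
    split_ifs with h
    · rfl
    · rw [notMem_support_iff.mp h, map_zero]
  have h2 := congrArg (topL 𝒜 n ι) (coeff_linear_pow a n α)
  rw [h1]
  rw [← nsmul_eq_mul, map_nsmul, nsmul_eq_mul] at h2
  rw [h2]
  split_ifs with h
  · rw [← nsmul_eq_mul, map_nsmul, nsmul_eq_mul]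
  · rw [map_zero, topL_apply]
    have := DirectSum.decompose_of_mem_ne 𝒜 (monomial_mem_graded 𝒜 a ha α) h
    rw [Submodule.coe_eq_zero.mp this, map_zero, mul_zero]

theorem hw_diffOp_topPower {k A : Type*} [Field k] [CommRing A] [Algebra k A]
    (𝒜 : ℕ → Submodule k A) [GradedAlgebra 𝒜] (n : ℕ) {r : ℕ}
    (a : Fin r → A) (ha : ∀ i, a i ∈ 𝒜 1) (ι : (𝒜 n) ≃ₗ[k] k) (f : MvPolynomial (Fin r) k)
    (γ : Fin r →₀ ℕ) :
    ((∏ j, (γ j).factorial : ℕ) : k) * coeff γ (diffOp f (topPowerPoly 𝒜 n a ι)) =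
      (n.factorial : k) * topL 𝒜 n ι ((∏ j, a j ^ γ j) * aeval a f) := by
  rw [hw_diffOp, aeval_eq_sum_mine a f, Finset.mul_sum, map_sum, Finset.mul_sum]
  refine Finset.sum_congr rfl fun β _ => ?_
  rw [hw_topPower 𝒜 n a ha, mul_smul_comm, map_smul, smul_eq_mul, ← Finset.prod_mul_distrib]
  simp only [Finsupp.add_apply, pow_add]
  ring

theorem eq_zero_of_topL {k A : Type*} [Field k] [CommRing A] [Algebra k A]
    (𝒜 : ℕ → Submodule k A) [GradedAlgebra 𝒜] (n : ℕ) (ι : (𝒜 n) ≃ₗ[k] k)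
    (htop : ∀ i, n < i → 𝒜 i = ⊥) (hPD : PoincareDuality 𝒜 n) (x : A)
    (hx : ∀ y, topL 𝒜 n ι (y * x) = 0) : x = 0 := by
  classical
  by_contra hne
  have : ∃ i, (DirectSum.decompose 𝒜 x i : A) ≠ 0 := by
    by_contra! hcon
    apply hne
    rw [← DirectSum.sum_support_decompose 𝒜 x]
    exact Finset.sum_eq_zero fun i _ => hcon i
  obtain ⟨i, hi⟩ := this
  have hin : i ≤ n := by
    by_contra! h
    have h1 := (DirectSum.decompose 𝒜 x i).2
    exact hi ((Submodule.mem_bot k).mp ((htop i h).le h1))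
  obtain ⟨y, hy, hxy⟩ := (hPD i hin).1 _ (DirectSum.decompose 𝒜 x i).2 hi
  have h2 := hx y
  rw [topL_apply, LinearEquiv.map_eq_zero_iff, ← Submodule.coe_eq_zero,
    DirectSum.coe_decompose_mul_of_left_mem_of_le 𝒜 hy (Nat.sub_le n i),
    Nat.sub_sub_self hin, mul_comm] at h2
  exact hxy h2

/-- A finite-dimensional graded commutative algebra `A` over a field `k` of
characteristic zero, generated in degree one, with `A^0 ≅ A^n ≅ k` and Poincaré
duality, is determined by its top power polynomial `P`: the kernel of the evaluation
map `Φ : k[t_1, …, t_r] → A`, `t_i ↦ a_i` (for a basis `a_1, …, a_r` of `A^1`), is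
exactly the ideal of polynomials annihilating `P` as differential operators; since
`Φ` is surjective and maps degree-`d` homogeneous polynomials into `A^d`, it induces
an isomorphism of graded algebras `A ≅ k[t_1, …, t_r]/I`. -/
theorem kernel_of_evaluation_eq_annihilator_of_volume_polynomial
    {k A : Type*} [Field k] [CharZero k] [CommRing A] [Algebra k A]
    [FiniteDimensional k A] (𝒜 : ℕ → Submodule k A) (n : ℕ) [GradedAlgebra 𝒜]
    (htop : ∀ i, n < i → 𝒜 i = ⊥)
    (h0 : Module.finrank k (𝒜 0) = 1)
    (hgen : Algebra.adjoin k ((𝒜 1 : Submodule k A) : Set A) = ⊤)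
    (hPD : PoincareDuality 𝒜 n)
    {r : ℕ} (b : Module.Basis (Fin r) k (𝒜 1)) (ι : (𝒜 n) ≃ₗ[k] k) :
    (∀ f : MvPolynomial (Fin r) k,
        MvPolynomial.aeval (fun i => (b i : A)) f = 0 ↔
          diffOp f (topPowerPoly 𝒜 n (fun i => (b i : A)) ι) = 0) ∧
    Function.Surjective
      (MvPolynomial.aeval (fun i => (b i : A)) : MvPolynomial (Fin r) k → A) ∧
    (∀ (d : ℕ) (f : MvPolynomial (Fin r) k), f.IsHomogeneous d →
        MvPolynomial.aeval (fun i => (b i : A)) f ∈ 𝒜 d) := by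
  have ha : ∀ i, (b i : A) ∈ 𝒜 1 := fun i => (b i).2
  have hsurj : Function.Surjective
      (MvPolynomial.aeval (fun i => (b i : A)) : MvPolynomial (Fin r) k → A) := by
    intro x
    have hle : Algebra.adjoin k ((𝒜 1 : Submodule k A) : Set A) ≤
        (MvPolynomial.aeval (R := k) (fun i => (b i : A))).range := by
      apply Algebra.adjoin_le
      intro y hy
      refine ⟨∑ i, C (b.repr ⟨y, hy⟩ i) * X i, ?_⟩
      have := congrArg (Subtype.val) (b.sum_repr ⟨y, hy⟩)
      simp only [AddSubmonoidClass.coe_finsetSum, Submodule.coe_smul] at this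
      simpa [Algebra.smul_def] using this
    have hx : x ∈ Algebra.adjoin k ((𝒜 1 : Submodule k A) : Set A) := by
      rw [hgen]; trivial
    exact hle hx
  refine ⟨fun f => ⟨fun hf => ?_, fun hf => ?_⟩, hsurj, ?_⟩
  · ext γ
    have h := hw_diffOp_topPower 𝒜 n _ ha ι f γ
    rw [hf, mul_zero, map_zero, mul_zero] at h
    rw [coeff_zero]
    refine (mul_eq_zero.mp h).resolve_left ?_
    exact_mod_cast Finset.prod_ne_zero_iff.mpr fun j _ => Nat.factorial_ne_zero _
  · apply eq_zero_of_topL 𝒜 n ι htop hPD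
    intro y
    obtain ⟨g, rfl⟩ := hsurj y
    rw [aeval_eq_sum_mine _ g, Finset.sum_mul, map_sum]
    refine Finset.sum_eq_zero fun γ _ => ?_
    have h := hw_diffOp_topPower 𝒜 n _ ha ι f γ
    rw [hf, coeff_zero, mul_zero] at h
    rw [smul_mul_assoc, map_smul,
      (mul_eq_zero.mp h.symm).resolve_left (by exact_mod_cast Nat.factorial_ne_zero n), smul_zero]
  · intro d f hf
    rw [aeval_eq_sum_mine]
    refine Submodule.sum_mem _ fun γ hγ => Submodule.smul_mem _ _ ?_
    have h := monomial_mem_graded 𝒜 _ ha γ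
    have hd : ∑ j, γ j = d := by
      have := hf (mem_support_iff.mp hγ)
      rw [← this, Finsupp.weight_apply, Finsupp.sum_fintype _ _ (by simp)]
      simp
    rwa [hd] at h
end

section
/- Let k be a field of characteristic zero and let A = ⊕_{i=0}^n A^i and B = ⊕_{i=0}^n B^i be graded commutative k-algebras, finite dimensional as k-vector spaces, such that: (1) A^0 ≅ A^n ≅ B^0 ≅ B^n ≅ k; (2) A and B are each generated as k-algebras by their degree-one pieces; (3) A has Poincaré duality; (4) there is a k-linear isomorphism φ: A^1 → B^1 such that, for fixed k-linear isomorphisms ι_A: A^n → k and ι_B: B^n → k, one has ι_A(a_1 ⋯ a_n) = ι_B(φ(a_1) ⋯ φ(a_n)) for all a_1, ..., a_n ∈ A^1. Let I_B be the ideal of B generated by all homogeneous y ∈ B with y · B^{n - deg(y)} = 0, and q: B → B/I_B the quotient map, so B/I_B is the Gorenstein quotient Gor(B). Then there is an isomorphism of graded k-algebras φ̃: A → B/I_B whose restriction to A^1 equals q ∘ φ. -/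
/-- The ideal generated by all homogeneous elements `y` (say of degree `i`)
with `y · B^{n - i} = 0`; the quotient by it is the Gorenstein quotient `Gor(B)`. -/
def gorIdeal {k B : Type*} [Field k] [CommRing B] [Algebra k B]
    (ℬ : ℕ → Submodule k B) (n : ℕ) : Ideal B :=
  Ideal.span {y | ∃ i ≤ n, y ∈ ℬ i ∧ ∀ z ∈ ℬ (n - i), y * z = 0}

open DirectSum in
theorem mem_gorIdeal_iff_aux {k B : Type*} [Field k] [CommRing B] [Algebra k B]
    (ℬ : ℕ → Submodule k B) (n : ℕ) [GradedAlgebra ℬ] (htopB : ∀ i, n < i → ℬ i = ⊥) (b : B) :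
    b ∈ gorIdeal ℬ n ↔ ∀ x, (decompose ℬ (b * x) n) = 0 := by
  constructor
  · intro hb
    unfold gorIdeal at hb
    induction hb using Submodule.span_induction with
    | mem y hy =>
      obtain ⟨i, hi, hyi, hz⟩ := hy
      intro x
      apply Subtype.ext
      rw [coe_decompose_mul_of_left_mem_of_le ℬ hyi hi]
      exact hz _ (SetLike.coe_mem _)
    | zero => intro x; simp
    | add x y _ _ hx hy => intro z; rw [add_mul, decompose_add, DirectSum.add_apply, hx, hy, add_zero]
    | smul a x _ hx => intro z; rw [smul_eq_mul, mul_comm a, mul_assoc]; exact hx _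
  · intro h
    classical
    rw [← sum_support_decompose ℬ b]
    refine Ideal.sum_mem _ fun i _ => ?_
    by_cases hi : i ≤ n
    · refine Ideal.subset_span ⟨i, hi, SetLike.coe_mem _, fun z hz => ?_⟩
      have h1 := congrArg Subtype.val (h z)
      have h2 := coe_decompose_mul_of_right_mem_of_le ℬ (a := b) (n := n) hz (Nat.sub_le n i)
      rw [h1, Nat.sub_sub_self hi] at h2
      exact h2.symm
    · have := SetLike.coe_mem (decompose ℬ b i)
      have h0 := (htopB i (by omega)).le this
      rw [Submodule.mem_bot] at h0
      rw [h0]; exact Ideal.zero_mem _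

theorem list_prod_mem_aux {k A M : Type*} [Field k] [CommRing A] [Algebra k A]
    (𝒜 : ℕ → Submodule k A) [GradedAlgebra 𝒜] (f : M → A) (hf : ∀ m, f m ∈ 𝒜 1)
    (l : List M) : (l.map f).prod ∈ 𝒜 l.length := by
  have := SetLike.list_prod_map_mem_graded (A := 𝒜) l (fun _ => 1) f (fun m _ => hf m)
  simpa using this

theorem aeval_surj_aux {k A M : Type*} [Field k] [CommRing A] [Algebra k A]
    (f : M → A) (S : Set A) (hS : Algebra.adjoin k S = ⊤) (h : Set.range f = S) :
    Function.Surjective (MvPolynomial.aeval f : MvPolynomial M k →ₐ[k] A) := by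
  rw [← AlgHom.range_eq_top, ← Algebra.adjoin_range_eq_range_aeval, h, hS]

set_option maxHeartbeats 1000000 in
/-- If `A`, `B` are finite-dimensional graded commutative algebras over a field `k` of
characteristic zero, both generated in degree one with degree-`0` and degree-`n`
pieces isomorphic to `k`, `A` has Poincaré duality, and there is a linear isomorphism
`φ : A^1 → B^1` matching all top products of degree-one elements, then `φ` extends to
an isomorphism of graded algebras between `A` and the Gorenstein quotient `Gor(B)`. -/
theorem iso_with_gorenstein_quotient
    {k A B : Type*} [Field k] [CharZero k]
    [CommRing A] [Algebra k A] [FiniteDimensional k A]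
    [CommRing B] [Algebra k B] [FiniteDimensional k B]
    (𝒜 : ℕ → Submodule k A) (ℬ : ℕ → Submodule k B) (n : ℕ)
    [GradedAlgebra 𝒜] [GradedAlgebra ℬ]
    (htopA : ∀ i, n < i → 𝒜 i = ⊥) (htopB : ∀ i, n < i → ℬ i = ⊥)
    (h0A : Module.finrank k (𝒜 0) = 1) (h0B : Module.finrank k (ℬ 0) = 1)
    (hgenA : Algebra.adjoin k ((𝒜 1 : Submodule k A) : Set A) = ⊤)
    (hgenB : Algebra.adjoin k ((ℬ 1 : Submodule k B) : Set B) = ⊤)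
    (hPD : PoincareDuality 𝒜 n)
    (ιA : (𝒜 n) ≃ₗ[k] k) (ιB : (ℬ n) ≃ₗ[k] k)
    (φ : (𝒜 1) ≃ₗ[k] (ℬ 1))
    (hcompat : ∀ (a : Fin n → (𝒜 1))
        (hA : (∏ i, ((a i : A))) ∈ 𝒜 n) (hB : (∏ i, ((φ (a i) : B))) ∈ ℬ n),
        ιA ⟨∏ i, ((a i : A)), hA⟩ = ιB ⟨∏ i, ((φ (a i) : B)), hB⟩) :
    ∃ e : A ≃ₐ[k] (B ⧸ gorIdeal ℬ n),
      (∀ x : (𝒜 1), e (x : A) = Ideal.Quotient.mk (gorIdeal ℬ n) ((φ x : B))) ∧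
      (∀ i ≤ n, ∀ x ∈ 𝒜 i,
        e x ∈ (ℬ i).map (Ideal.Quotient.mkₐ k (gorIdeal ℬ n)).toLinearMap) := by
  classical
  set f : MvPolynomial (𝒜 1) k →ₐ[k] A := MvPolynomial.aeval (fun a : 𝒜 1 => (a : A)) with hf
  set g : MvPolynomial (𝒜 1) k →ₐ[k] B := MvPolynomial.aeval (fun a : 𝒜 1 => (φ a : B)) with hg
  have hfs : Function.Surjective f := aeval_surj_aux _ _ hgenA (by simp)
  have hgs : Function.Surjective g := aeval_surj_aux _ _ hgenB (by
    ext x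
    constructor
    · rintro ⟨a, rfl⟩; exact (φ a).2
    · intro hx; exact ⟨φ.symm ⟨x, hx⟩, by simp⟩)
  have hfl : ∀ l : List (𝒜 1), (l.map (fun a : 𝒜 1 => (a : A))).prod ∈ 𝒜 l.length :=
    list_prod_mem_aux 𝒜 _ (fun m => m.2)
  have hgl : ∀ l : List (𝒜 1), (l.map (fun a : 𝒜 1 => (φ a : B))).prod ∈ ℬ l.length :=
    list_prod_mem_aux ℬ _ (fun m => (φ m).2)
  have hlist : ∀ l : List (𝒜 1),
      ιA (DirectSum.decompose 𝒜 (l.map (fun a : 𝒜 1 => (a : A))).prod n) =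
      ιB (DirectSum.decompose ℬ (l.map (fun a : 𝒜 1 => (φ a : B))).prod n) := by
    intro l
    by_cases hl : l.length = n
    · subst hl
      have e1 : (l.map (fun a : 𝒜 1 => (a : A))).prod = ∏ i, ((l.get i : 𝒜 1) : A) := by
        rw [← List.prod_ofFn]; congr 1
        conv_lhs => rw [← List.ofFn_get l, List.map_ofFn]
        rfl
      have e2 : (l.map (fun a : 𝒜 1 => (φ a : B))).prod = ∏ i, ((φ (l.get i)) : B) := by
        rw [← List.prod_ofFn]; congr 1
        conv_lhs => rw [← List.ofFn_get l, List.map_ofFn]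
        rfl
      have hA := hfl l
      have hB := hgl l
      rw [e1] at hA ⊢
      rw [e2] at hB ⊢
      have := hcompat l.get hA hB
      convert this using 2
      · exact Subtype.ext (DirectSum.decompose_of_mem_same 𝒜 hA)
      · exact Subtype.ext (DirectSum.decompose_of_mem_same ℬ hB)
    · have h1 : DirectSum.decompose 𝒜 (l.map (fun a : 𝒜 1 => (a : A))).prod n = 0 :=
        Subtype.ext (DirectSum.decompose_of_mem_ne 𝒜 (hfl l) hl)
      have h2 : DirectSum.decompose ℬ (l.map (fun a : 𝒜 1 => (φ a : B))).prod n = 0 :=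
        Subtype.ext (DirectSum.decompose_of_mem_ne ℬ (hgl l) hl)
      rw [h1, h2, map_zero, map_zero]
  have hind : ∀ (P : MvPolynomial (𝒜 1) k → Prop)
      (_ : ∀ l : List (𝒜 1), ∀ c : k, P (c • (l.map MvPolynomial.X).prod))
      (_ : ∀ p q, P p → P q → P (p + q)), ∀ p, P p := by
    intro P h1 h2 p
    have : ∀ l : List (𝒜 1), P (p * (l.map MvPolynomial.X).prod) := by
      induction p using MvPolynomial.induction_on with
      | C a => intro l; rw [← MvPolynomial.smul_eq_C_mul]; exact h1 l a
      | add p q hp hq => intro l; rw [add_mul]; exact h2 _ _ (hp l) (hq l)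
      | mul_X p a hp =>
        intro l
        have := hp (a :: l)
        rwa [List.map_cons, List.prod_cons, ← mul_assoc] at this
    simpa using this []
  have hfp : ∀ l : List (𝒜 1), f (l.map MvPolynomial.X).prod
      = (l.map (fun a : 𝒜 1 => (a : A))).prod := by
    intro l
    rw [map_list_prod, List.map_map]
    congr 2
    funext a
    simp [hf]
  have hgp : ∀ l : List (𝒜 1), g (l.map MvPolynomial.X).prod
      = (l.map (fun a : 𝒜 1 => (φ a : B))).prod := by
    intro l
    rw [map_list_prod, List.map_map]
    congr 2
    funext a
    simp [hg]
  have hlam : ∀ p, ιA (DirectSum.decompose 𝒜 (f p) n) = ιB (DirectSum.decompose ℬ (g p) n) := by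
    apply hind
    · intro l c
      rw [map_smul f, map_smul g, hfp, hgp, DirectSum.decompose_smul, DirectSum.decompose_smul,
        DirectSum.smul_apply, DirectSum.smul_apply, map_smul, map_smul, hlist]
    · intro p q hp hq
      rw [map_add f, map_add g, DirectSum.decompose_add, DirectSum.decompose_add,
        DirectSum.add_apply, DirectSum.add_apply, map_add, map_add, hp, hq]
  have hgorA : ∀ a, a ∈ gorIdeal 𝒜 n ↔ a = 0 := by
    intro a
    have : gorIdeal 𝒜 n = ⊥ := by
      unfold gorIdeal
      rw [Ideal.span_eq_bot]
      rintro y ⟨i, hi, hy, hz⟩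
      by_contra h0
      obtain ⟨z, hz1, hz2⟩ := (hPD i hi).1 y hy h0
      exact hz2 (hz z hz1)
    rw [this, Ideal.mem_bot]
  have hker : ∀ p, f p = 0 ↔ g p ∈ gorIdeal ℬ n := by
    intro p
    rw [← hgorA, mem_gorIdeal_iff_aux 𝒜 n htopA, mem_gorIdeal_iff_aux ℬ n htopB,
      hfs.forall, hgs.forall]
    refine forall_congr' fun r => ?_
    rw [← map_mul, ← map_mul, ← ιA.map_eq_zero_iff, ← ιB.map_eq_zero_iff, hlam]
  set h : MvPolynomial (𝒜 1) k →ₐ[k] (B ⧸ gorIdeal ℬ n) :=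
    (Ideal.Quotient.mkₐ k (gorIdeal ℬ n)).comp g with hh
  have hhs : Function.Surjective h := (Ideal.Quotient.mkₐ_surjective k _).comp hgs
  have hkk : RingHom.ker f = RingHom.ker h := by
    ext p
    rw [RingHom.mem_ker, RingHom.mem_ker, hker, hh, AlgHom.comp_apply, Ideal.Quotient.mkₐ_eq_mk,
      Ideal.Quotient.eq_zero_iff_mem]
  let e : A ≃ₐ[k] (B ⧸ gorIdeal ℬ n) :=
    ((Ideal.quotientKerAlgEquivOfSurjective hfs).symm.trans
      (Ideal.quotientEquivAlgOfEq k hkk)).trans (Ideal.quotientKerAlgEquivOfSurjective hhs)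
  have he : ∀ p, e (f p) = Ideal.Quotient.mkₐ k (gorIdeal ℬ n) (g p) := by
    intro p
    have : (Ideal.quotientKerAlgEquivOfSurjective hfs).symm (f p) =
        Ideal.Quotient.mk (RingHom.ker f) p := by
      rw [AlgEquiv.symm_apply_eq]; rfl
    simp only [e, AlgEquiv.trans_apply, this]
    rfl
  refine ⟨e, ?_, ?_⟩
  · intro x
    have := he (MvPolynomial.X x)
    simpa [hf, hg] using this
  · intro i _ x hx
    have key : ∀ p, e (DirectSum.decompose 𝒜 (f p) i : A) ∈
        (ℬ i).map (Ideal.Quotient.mkₐ k (gorIdeal ℬ n)).toLinearMap := by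
      apply hind
      · intro l c
        by_cases hl : l.length = i
        · subst hl
          have hm : f (c • (l.map MvPolynomial.X).prod) ∈ 𝒜 l.length := by
            rw [map_smul, hfp]; exact Submodule.smul_mem _ _ (hfl l)
          rw [DirectSum.decompose_of_mem_same 𝒜 hm, he]
          refine Submodule.mem_map_of_mem (f := (Ideal.Quotient.mkₐ k (gorIdeal ℬ n)).toLinearMap) ?_
          rw [map_smul, hgp]; exact Submodule.smul_mem _ _ (hgl l)
        · have hm : f (c • (l.map MvPolynomial.X).prod) ∈ 𝒜 l.length := by
            rw [map_smul, hfp]; exact Submodule.smul_mem _ _ (hfl l)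
          rw [DirectSum.decompose_of_mem_ne 𝒜 hm hl, map_zero]
          exact Submodule.zero_mem _
      · intro p q hp hq
        rw [map_add, DirectSum.decompose_add, DirectSum.add_apply, Submodule.coe_add, map_add]
        exact Submodule.add_mem _ hp hq
    obtain ⟨p, rfl⟩ := hfs x
    have := key p
    rwa [DirectSum.decompose_of_mem_same 𝒜 hx] at this
end
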